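/- (Theorem on curves/low dimension, torus case.) Let K be an algebraically closed field of characteristic p > 0, let X be a subvariety of (Kˣ)² with X ≠ (Kˣ)² (so X has dimension at most 1), and let Γ be a finitely generated subgroup of (Kˣ)². Then X ∩ Γ is a finite union of F-sets in Γ, i.e., of sets of the form S·B where S is a groupless F-set in Γ and B is a subgroup of Γ. -/

import Mathlib

/-- `X` is a subvariety of the torus `(Kˣ)²`: the common zero set in `(Kˣ)²` of a
family of polynomials in two variables over `K`. -/
def IsTorusSubvariety₂ (K : Type*) [Field K] (X : Set (Kˣ × Kˣ)) : Prop :=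
  ∃ 𝒮 : Set (MvPolynomial (Fin 2) K),
    X = {g : Kˣ × Kˣ | ∀ f ∈ 𝒮, MvPolynomial.eval ![(g.1 : K), (g.2 : K)] f = 0}

/-- `S` is a groupless `F`-set in the subgroup `Γ` of `(Kˣ)²`: a subset of `Γ` of the
form `{α₀ · ∏_{i=1}^r F_q^{k·n_i}(α_i) : n_1, …, n_r ∈ ℕ}` for some `r ≥ 0`, `k ≥ 1`,
a power `q = p^a` of `p`, and `α₀, …, α_r ∈ (Kˣ)²`, where `F_q : x ↦ x^q` is the
`q`-power Frobenius of the torus. -/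
def IsGrouplessFSet₂ {K : Type*} [Field K] (p : ℕ)
    (Γ : Subgroup (Kˣ × Kˣ)) (S : Set (Kˣ × Kˣ)) : Prop :=
  S ⊆ ↑Γ ∧ ∃ (a : ℕ), 1 ≤ a ∧ ∃ (r k : ℕ), 1 ≤ k ∧
    ∃ (α₀ : Kˣ × Kˣ) (α : Fin r → Kˣ × Kˣ),
      S = {g | ∃ n : Fin r → ℕ, g = α₀ * ∏ i : Fin r, (α i) ^ ((p ^ a) ^ (k * n i))}

/-- `T` is an `F`-set in `Γ`: a set of the form `S·B` where `S` is a groupless `F`-set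
in `Γ` and `B` is a subgroup of `Γ`. -/
def IsFSet₂ {K : Type*} [Field K] (p : ℕ)
    (Γ : Subgroup (Kˣ × Kˣ)) (T : Set (Kˣ × Kˣ)) : Prop :=
  ∃ (S : Set (Kˣ × Kˣ)) (B : Subgroup (Kˣ × Kˣ)),
    IsGrouplessFSet₂ p Γ S ∧ B ≤ Γ ∧ T = {g | ∃ s ∈ S, ∃ b ∈ B, g = s * b}

open IntermediateField in
lemma hom_exists_trans {k L : Type*} [Field k] [Field L] [Algebra k L] [Algebra.EssFiniteType k L]
    (x : Lˣ) (hx : Transcendental k (x : L)) : ∃ φ : Lˣ →* Multiplicative ℤ, φ x ≠ 1 := by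
  have hi : AlgebraicIndepOn k id ({(x : L)} : Set L) := by
    exact (algebraicIndependent_singleton_iff (⟨(x : L), rfl⟩ : ({(x : L)} : Set L))).2 hx
  have : Algebra.IsAlgebraic (Algebra.adjoin k (Set.univ : Set L)) L := by
    rw [Algebra.adjoin_univ]
    exact ⟨fun y => isAlgebraic_algebraMap (⟨y, trivial⟩ : (⊤ : Subalgebra k L))⟩
  obtain ⟨B, hB, -, hb⟩ := exists_isTranscendenceBasis_between ({(x : L)} : Set L) Set.univ
    (Set.subset_univ _) hi
  have hxB : (x : L) ∈ B := hB rfl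
  set E := adjoin k (B \ {(x : L)}) with hE
  have hxE : Transcendental E (x : L) := by
    have h := hb.1.transcendental_adjoin (s := {b | (b : L) ≠ x}) (i := ⟨x, hxB⟩) (by simp)
    rw [hE, transcendental_adjoin_iff]
    have h2 : (Subtype.val '' {b : B | (b : L) ≠ x}) = B \ {(x : L)} := by
      ext y; simp; tauto
    rwa [h2] at h
  have halg := hb.isAlgebraic_field
  have : Algebra.IsAlgebraic E⟮(x : L)⟯ L := by
    have h1 : (E⟮(x : L)⟯).restrictScalars k = adjoin k (Set.range (Subtype.val : B → L)) := by
      rw [hE, adjoin_adjoin_left, Set.sdiff_union_self, Set.union_eq_left.2 hB, Subtype.range_coe]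
    rw [← h1] at halg
    exact halg
  have : Algebra.EssFiniteType E L := Algebra.EssFiniteType.of_comp k _ _
  have : Algebra.EssFiniteType E⟮(x : L)⟯ L := Algebra.EssFiniteType.of_comp E _ _
  have : Module.Finite E⟮(x : L)⟯ L := Algebra.finite_of_essFiniteType_of_isAlgebraic
  let e := RatFunc.algEquivOfTranscendental (x : L) hxE
  let N : L →* RatFunc E := (e.symm : E⟮(x : L)⟯ →* RatFunc E).comp (Algebra.norm E⟮(x : L)⟯)
  have hN : N x = (RatFunc.X) ^ Module.finrank E⟮(x : L)⟯ L := by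
    have h1 : Algebra.norm E⟮(x : L)⟯ (x : L) = (AdjoinSimple.gen E (x : L)) ^ Module.finrank E⟮(x : L)⟯ L := by
      rw [← Algebra.norm_algebraMap]; rfl
    change e.symm (Algebra.norm E⟮(x : L)⟯ (x : L)) = _
    rw [h1, map_pow]
    congr 1
    exact RatFunc.algEquivOfTranscendental_symm_gen _ _
  let D : (RatFunc E)ˣ →* Multiplicative ℤ :=
    { toFun := fun u => Multiplicative.ofAdd (RatFunc.intDegree (u : RatFunc E))
      map_one' := by simp
      map_mul' := fun u v => by simp [RatFunc.intDegree_mul] }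
  refine ⟨D.comp (Units.map N), ?_⟩
  have hX : (RatFunc.X : RatFunc E) ≠ 0 := RatFunc.X_ne_zero
  have h3 : Units.map N x = (Units.mk0 _ hX) ^ Module.finrank E⟮(x : L)⟯ L := by
    ext; simp [hN]
  rw [MonoidHom.comp_apply, h3, map_pow]
  have h4 : D (Units.mk0 _ hX) = Multiplicative.ofAdd 1 := by simp [D]
  rw [h4, ← ofAdd_nsmul]
  have : 0 < Module.finrank E⟮(x : L)⟯ L := Module.finrank_pos
  intro h
  have := Multiplicative.ofAdd.injective (h.trans ofAdd_zero.symm)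
  simp at this
  omega

lemma tors_root {A : Type*} [CommGroup A] (q : ℕ) (hq : Function.Injective (fun x : A => x ^ q))
    (t : A) (ht : IsOfFinOrder t) : ∃ t' ∈ Subgroup.zpowers t, t' ^ q = t := by
  have : Finite (Subgroup.zpowers t) := ht.finite_zpowers
  have hinj : Function.Injective (fun x : Subgroup.zpowers t => x ^ q) := by
    intro x y h
    apply Subtype.ext
    apply hq
    simpa using congrArg Subtype.val h
  obtain ⟨x, hx⟩ := Finite.surjective_of_injective hinj ⟨t, Subgroup.mem_zpowers t⟩
  exact ⟨x, x.2, by simpa using congrArg Subtype.val hx⟩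

lemma fin_homs {A : Type*} [CommGroup A]
    (h1 : ∀ x : A, ¬ IsOfFinOrder x → ∃ φ : A →* Multiplicative ℤ, φ x ≠ 1)
    (Δ : Subgroup A) (hΔ : Δ.FG) :
    ∃ (n : ℕ) (φ : Fin n → (A →* Multiplicative ℤ)), ∀ x ∈ Δ, (∀ i, φ i x = 1) → IsOfFinOrder x := by
  obtain ⟨s, hs⟩ := hΔ
  let r : (Additive A →+ ℤ) →ₗ[ℤ] (s → ℤ) :=
    { toFun := fun f i => f (Additive.ofMul (i : A))
      map_add' := fun f g => by ext; simp
      map_smul' := fun f g => by ext; simp }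
  obtain ⟨n, v, hv⟩ := Submodule.fg_iff_exists_fin_generating_family.1
    (IsNoetherian.noetherian (LinearMap.range r))
  have hv' : ∀ i, ∃ f, r f = v i := fun i => by
    have : v i ∈ LinearMap.range r := by rw [← hv]; exact Submodule.subset_span ⟨i, rfl⟩
    exact this
  choose f hf using hv'
  refine ⟨n, fun i => AddMonoidHom.toMultiplicativeRight (f i), fun x hx h => ?_⟩
  by_contra hne
  obtain ⟨φ, hφ⟩ := h1 x hne
  apply hφ
  let φ' : Additive A →+ ℤ := MonoidHom.toAdditiveLeft φ
  have hm : r φ' ∈ Submodule.span ℤ (Set.range v) := by rw [hv]; exact ⟨_, rfl⟩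
  obtain ⟨c, hc⟩ := (Submodule.mem_span_range_iff_exists_fun ℤ).1 hm
  have hker : ∀ y ∈ Δ, φ' (Additive.ofMul y) = ∑ i, c i * f i (Additive.ofMul y) := by
    intro y hy
    rw [← hs] at hy
    induction hy using Subgroup.closure_induction with
    | mem y hy =>
      have := congrFun hc ⟨y, hy⟩
      simp only [← hf, Finset.sum_apply, Pi.smul_apply, smul_eq_mul] at this
      exact this.symm
    | one => simp
    | mul a b _ _ ha hb => 
      rw [ofMul_mul, map_add, ha, hb, ← Finset.sum_add_distrib]
      exact Finset.sum_congr rfl fun i _ => by rw [map_add]; ring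
    | inv a _ ha => 
      rw [ofMul_inv, map_neg, ha, ← Finset.sum_neg_distrib]
      exact Finset.sum_congr rfl fun i _ => by rw [map_neg]; ring
  have := hker x hx
  have h0 : ∀ i, f i (Additive.ofMul x) = 0 := fun i => by
    have := h i
    exact this
  simp only [h0, mul_zero, Finset.sum_const_zero] at this
  exact this

lemma tors_finite {A : Type*} [CommGroup A] (Δ : Subgroup A) (hΔ : Δ.FG) :
    {x | x ∈ Δ ∧ IsOfFinOrder x}.Finite := by
  have : Group.FG Δ := (Group.fg_iff_subgroup_fg Δ).2 hΔ
  have : Module.Finite ℤ (Additive Δ) := by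
    rw [Module.Finite.iff_addGroup_fg]; infer_instance
  have : Finite (Submodule.torsion ℤ (Additive Δ)) := by
    apply Module.finite_of_fg_torsion
    exact Submodule.torsion_isTorsion
  let f : Submodule.torsion ℤ (Additive Δ) → A := fun x => ((Additive.toMul (x : Additive Δ) : Δ) : A)
  refine (Set.finite_range f).subset ?_
  rintro x ⟨hx, hf⟩
  refine ⟨⟨Additive.ofMul ⟨x, hx⟩, ?_⟩, rfl⟩
  rw [isOfFinOrder_iff_pow_eq_one] at hf
  obtain ⟨n, hn, h⟩ := hf
  rw [Submodule.mem_torsion_iff]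
  refine ⟨⟨(n : ℤ), mem_nonZeroDivisors_of_ne_zero (by positivity)⟩, ?_⟩
  have : (⟨x, hx⟩ : Δ) ^ n = 1 := Subtype.ext (by simpa using h)
  have h2 := congrArg Additive.ofMul this
  rw [ofMul_pow, ofMul_one] at h2
  rw [← h2]
  simp [Submonoid.smul_def]

lemma fg_hom {A : Type*} [CommGroup A] [Group.FG A] (x : A) (hx : ¬ IsOfFinOrder x) :
    ∃ φ : Additive A →+ ℤ, φ (Additive.ofMul x) ≠ 0 := by
  have : Module.Finite ℤ (Additive A) := by
    rw [Module.Finite.iff_addGroup_fg]; infer_instance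
  let T := Submodule.torsion ℤ (Additive A)
  have : Module.Free ℤ (Additive A ⧸ T) := inferInstance
  let b := Module.Free.chooseBasis ℤ (Additive A ⧸ T)
  have h1 : T.mkQ (Additive.ofMul x) ≠ 0 := by
    intro h
    rw [Submodule.mkQ_apply, Submodule.Quotient.mk_eq_zero, Submodule.mem_torsion_iff] at h
    obtain ⟨⟨n, hn⟩, h⟩ := h
    apply hx
    rw [isOfFinOrder_iff_zpow_eq_one]
    exact ⟨n, nonZeroDivisors.ne_zero hn, h⟩
  have h2 : ∃ i, b.repr (T.mkQ (Additive.ofMul x)) i ≠ 0 := by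
    by_contra! h
    apply h1
    apply b.repr.injective
    ext i; rw [h i]; simp
  obtain ⟨i, hi⟩ := h2
  exact ⟨((b.coord i).comp T.mkQ).toAddMonoidHom, hi⟩

lemma inf_div_tors {A : Type*} [CommGroup A] (Δ : Subgroup A) (hΔ : Δ.FG) (q : ℕ) (hq : 2 ≤ q)
    (x : A) (h : ∀ n : ℕ, ∃ y ∈ Δ, y ^ (q ^ n) = x) : IsOfFinOrder x := by
  have : Group.FG Δ := (Group.fg_iff_subgroup_fg Δ).2 hΔ
  have hx : x ∈ Δ := by obtain ⟨y, hy, h⟩ := h 0; simp at h; exact h ▸ hy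
  by_contra hne
  obtain ⟨φ, hφ⟩ := fg_hom (⟨x, hx⟩ : Δ) (by rwa [← Submonoid.isOfFinOrder_coe] )
  apply hφ
  set z := φ (Additive.ofMul ⟨x, hx⟩)
  have hd : ∀ n : ℕ, ((q : ℤ) ^ n) ∣ z := by
    intro n
    obtain ⟨y, hy, h⟩ := h n
    refine ⟨φ (Additive.ofMul ⟨y, hy⟩), ?_⟩
    have : (⟨x, hx⟩ : Δ) = ⟨y, hy⟩ ^ (q ^ n) := Subtype.ext h.symm
    simp only [z, this, ofMul_pow, map_nsmul]
    simp
  apply Int.eq_zero_of_abs_lt_dvd (hd z.natAbs)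
  have := Nat.lt_pow_self (n := z.natAbs) (a := q) (by omega)
  rw [Int.abs_eq_natAbs]
  exact_mod_cast this

lemma fin_reps {A : Type*} [CommGroup A] (Δ : Subgroup A) (hΔ : Δ.FG) (q : ℕ) (hq : 1 ≤ q) :
    ∃ R : Set A, R.Finite ∧ R ⊆ Δ ∧ ∀ x ∈ Δ, ∃ γ ∈ R, ∃ y ∈ Δ, x = γ * y ^ q := by
  have : Group.FG Δ := (Group.fg_iff_subgroup_fg Δ).2 hΔ
  let H : Subgroup Δ := (powMonoidHom q : Δ →* Δ).range
  have : Finite (Δ ⧸ H) := by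
    apply CommGroup.finite_of_fg_isMulTorsion
    intro x
    induction x using QuotientGroup.induction_on with
    | H x =>
      rw [isOfFinOrder_iff_pow_eq_one]
      refine ⟨q, hq, ?_⟩
      rw [← QuotientGroup.mk_pow, QuotientGroup.eq_one_iff]
      exact ⟨x, rfl⟩
  refine ⟨Set.range (fun z : Δ ⧸ H => ((Quotient.out z : Δ) : A)), Set.finite_range _, ?_, ?_⟩
  · rintro _ ⟨z, rfl⟩; exact (Quotient.out z).2
  · intro x hx
    have h : ((Quotient.out ((⟨x, hx⟩ : Δ) : Δ ⧸ H) : Δ) : Δ ⧸ H) = ((⟨x, hx⟩ : Δ) : Δ ⧸ H) := Quotient.out_eq' _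
    rw [QuotientGroup.eq] at h
    obtain ⟨y, hy⟩ := h
    refine ⟨_, ⟨((⟨x, hx⟩ : Δ) : Δ ⧸ H), rfl⟩, y, y.2, ?_⟩
    have := congrArg Subtype.val hy
    simp only [powMonoidHom_apply, Subgroup.coe_pow, Subgroup.coe_mul, Subgroup.coe_inv] at this
    rw [this]; simp


lemma finite_closure_group {A : Type*} [CommGroup A]
    (h1 : ∀ x : A, ¬ IsOfFinOrder x → ∃ φ : A →* Multiplicative ℤ, φ x ≠ 1)
    (q : ℕ) (hq2 : 2 ≤ q) (hq : Function.Injective (fun x : A => x ^ q))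
    (W : Set A) (hW : W.Finite) (u : A) :
    ∃ E : Set A, E.Finite ∧ u ∈ E ∧ ∀ e ∈ E, ∀ w ∈ W, ∀ v, v ^ q = e * w → v ∈ E := by
  have hqn : ∀ n : ℕ, Function.Injective (fun x : A => x ^ (q ^ n)) := by
    intro n
    induction n with
    | zero => intro x y h; simpa using h
    | succ n ih =>
      intro x y h
      apply ih
      apply hq
      simpa [pow_succ, pow_mul] using h
  set Δ := Subgroup.closure (insert u W) with hΔ
  have hfg : Δ.FG := by
    rw [Subgroup.fg_iff]
    exact ⟨_, rfl, hW.insert u⟩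
  obtain ⟨n, φ, hφ⟩ := fin_homs h1 Δ hfg
  let ψ : A → Fin n → ℤ := fun a i => Multiplicative.toAdd (φ i a)
  have hψmul : ∀ a b, ψ (a * b) = ψ a + ψ b := fun a b => by ext i; simp [ψ]
  have hψdiv : ∀ a b, ψ (a / b) = ψ a - ψ b := fun a b => by ext i; simp [ψ]
  have hψpow : ∀ a (k : ℕ), ψ (a ^ k) = k • ψ a := fun a k => by ext i; simp [ψ]
  obtain ⟨B, hB⟩ : ∃ B : ℤ, ∀ w ∈ insert u W, ∀ i, |ψ w i| ≤ B := by
    have hf : (insert u W).Finite := hW.insert u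
    have : (Set.image2 (fun w i => |ψ w i|) (insert u W) Set.univ).Finite :=
      Set.Finite.image2 _ hf Set.finite_univ
    obtain ⟨B, hB⟩ := this.bddAbove
    exact ⟨B, fun w hw i => hB ⟨w, hw, i, trivial, rfl⟩⟩
  refine ⟨{v | (∃ k : ℕ, v ^ (q ^ k) ∈ Δ) ∧ ∀ i, |ψ v i| ≤ B}, ?_, ?_, ?_⟩
  · apply Set.Finite.of_finite_fibers ψ
    · apply (Set.finite_Icc (fun _ : Fin n => -B) (fun _ => B)).subset
      rintro _ ⟨v, ⟨-, hv⟩, rfl⟩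
      exact ⟨fun i => (abs_le.1 (hv i)).1, fun i => (abs_le.1 (hv i)).2⟩
    · rintro _ ⟨v0, ⟨⟨k0, hk0⟩, -⟩, rfl⟩
      apply Set.Finite.of_injOn (f := fun v => v / v0) (t := {x | x ∈ Δ ∧ IsOfFinOrder x})
      · rintro v ⟨⟨⟨k, hk⟩, -⟩, hv⟩
        have hv : ψ v = ψ v0 := hv
        have hm : (v / v0) ^ (q ^ (k + k0)) ∈ Δ := by
          rw [div_pow]
          apply Subgroup.div_mem
          · rw [pow_add, pow_mul]; exact Subgroup.pow_mem _ hk _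
          · rw [add_comm, pow_add, pow_mul]; exact Subgroup.pow_mem _ hk0 _
        have hfin : IsOfFinOrder ((v / v0) ^ (q ^ (k + k0))) := by
          apply hφ _ hm
          intro i
          have : ψ ((v / v0) ^ (q ^ (k + k0))) i = 0 := by
            rw [hψpow, hψdiv, hv]; simp
          exact this
        obtain ⟨t, ht, he⟩ := tors_root _ (hqn (k + k0)) _ hfin
        have : t = v / v0 := hqn _ he
        rw [← this] at hfin
        simp only [← this]
        refine ⟨?_, ?_⟩
        · rw [← this] at hm; rw [← this] at ht
          obtain ⟨z, hz⟩ := ht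
          rw [← hz]
          exact Subgroup.zpow_mem _ hm _
        · exact (isOfFinOrder_pow.1 hfin).resolve_right (pow_ne_zero _ (by omega))
      · intro a _ b _ h
        simpa using h
      · exact tors_finite Δ hfg
  · exact ⟨⟨0, by simpa using Subgroup.subset_closure (Set.mem_insert u W)⟩,
      hB u (Set.mem_insert u W)⟩
  · rintro e ⟨⟨k, hk⟩, he⟩ w hw v hv
    refine ⟨⟨k + 1, ?_⟩, fun i => ?_⟩
    · rw [pow_succ', pow_mul, hv, mul_pow]
      exact Subgroup.mul_mem _ hk (Subgroup.pow_mem _ (Subgroup.subset_closure (Set.mem_insert_of_mem u hw)) _)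
    · have h2 := congrFun (congrArg ψ hv) i
      rw [hψpow, hψmul] at h2
      simp only [Pi.smul_apply, Pi.add_apply, nsmul_eq_mul] at h2
      have h3 := abs_le.1 (he i)
      have h4 := abs_le.1 (hB w (Set.mem_insert_of_mem u hw) i)
      have hq' : (2 : ℤ) ≤ q := by exact_mod_cast hq2
      rw [abs_le]
      constructor <;> nlinarith

lemma finite_closure_field {L : Type*} [Field L] (p : ℕ) [Fact p.Prime] [Algebra (ZMod p) L]
    [Algebra.EssFiniteType (ZMod p) L] (m : ℕ) (hm : 1 ≤ m)
    (W : Set Lˣ) (hW : W.Finite) (u : Lˣ) :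
    ∃ E : Set Lˣ, E.Finite ∧ u ∈ E ∧ ∀ e ∈ E, ∀ w ∈ W, ∀ v, v ^ (p ^ m) = e * w → v ∈ E := by
  have : CharP L p := charP_of_injective_algebraMap (algebraMap (ZMod p) L).injective p
  apply finite_closure_group _ _ _ _ W hW u
  · intro x hx
    apply hom_exists_trans (k := ZMod p)
    intro halg
    apply hx
    have := IntermediateField.adjoin.finiteDimensional halg.isIntegral
    have : Finite (IntermediateField.adjoin (ZMod p) {(x : L)}) := Module.finite_of_finite (ZMod p)
    let y : (IntermediateField.adjoin (ZMod p) {(x : L)}) := IntermediateField.AdjoinSimple.gen (ZMod p) (x : L)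
    have hy : y ≠ 0 := by
      intro h
      have := congrArg Subtype.val h
      exact x.ne_zero this
    have h := isOfFinOrder_of_finite (Units.mk0 y hy)
    rw [isOfFinOrder_iff_pow_eq_one] at h ⊢
    obtain ⟨n, hn, h⟩ := h
    refine ⟨n, hn, ?_⟩
    ext
    have := congrArg (fun z : (IntermediateField.adjoin (ZMod p) {(x : L)})ˣ => ((z : IntermediateField.adjoin (ZMod p) {(x : L)}) : L)) h
    simpa [y] using this
  · calc 2 ≤ p := (Fact.out : p.Prime).two_le
      _ = p ^ 1 := by simp
      _ ≤ p ^ m := Nat.pow_le_pow_right (Fact.out : p.Prime).pos hm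
  · intro a b h
    ext
    have := congrArg Units.val h
    simp only [Units.val_pow_eq_pow_val] at this
    exact iterateFrobenius_inj L p m (by simpa [iterateFrobenius_def] using this)

/-- zero set of the exponential sum `∑ c i * χ i` -/
def ZS {K G ι : Type*} [Field K] [CommGroup G] [Fintype ι] (χ : ι → G →* Kˣ) (c : ι → K) : Set G :=
  {g | ∑ i, c i * (χ i g : K) = 0}

/-- geometric irreducibility substitute -/
def PP {K G ι : Type*} [Field K] [CommGroup G] [Fintype ι] (χ : ι → G →* Kˣ) (c : ι → K) : Prop :=
  ∀ d : ι → K, (¬ ∃ a : K, ∀ i, d i = a * c i) → (ZS χ c ∩ ZS χ d).Finite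

/-- the second vector is obtained from the first by translating by `g` and extracting `Q`-th roots. -/
def SRel {K G ι : Type*} [Field K] [CommGroup G] (χ : ι → G →* Kˣ) (j : ι) (Q : ℕ) (g : G)
    (c c' : ι → Kˣ) : Prop :=
  ∀ i, c' i ^ Q = c i * (χ i g / χ j g)

/-- coercion of coefficient vectors -/
def vc {K ι : Type*} [Field K] (c : ι → Kˣ) : ι → K := fun i => (c i : K)

set_option linter.unusedSectionVars false

section
variable {K G ι : Type*} [Field K] [CommGroup G] [Fintype ι] (χ : ι → G →* Kˣ) (j : ι)

lemma SRel.comp {Q Q' : ℕ} {g g' : G} {c c' c'' : ι → Kˣ} (h : SRel χ j Q g c c')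
    (h' : SRel χ j Q' g' c' c'') : SRel χ j (Q * Q') (g * g' ^ Q) c c'' := by
  intro i
  rw [mul_comm Q, pow_mul, h' i, mul_pow, h i, map_mul, map_mul, map_pow, map_pow, div_pow,
    mul_div_mul_comm, mul_assoc]

lemma units_pow_inj (p : ℕ) [Fact p.Prime] [CharP K p] (n : ℕ) :
    Function.Injective (fun x : Kˣ => x ^ (p ^ n)) := by
  intro a b h
  ext
  have := congrArg Units.val h
  simp only [Units.val_pow_eq_pow_val] at this
  exact iterateFrobenius_inj K p n (by simpa [iterateFrobenius_def] using this)

lemma ZS_general (p : ℕ) [Fact p.Prime] [CharP K p] (n : ℕ) {g : G} {d d' : ι → K}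
    (h : ∀ i, d i * (χ i g : K) = χ j g * d' i ^ (p ^ n)) (y : G) :
    y ∈ ZS χ d' ↔ g * y ^ (p ^ n) ∈ ZS χ d := by
  have key : ∑ i, d i * (χ i (g * y ^ (p ^ n)) : K) = χ j g * (∑ i, d' i * (χ i y : K)) ^ (p ^ n) := by
    rw [sum_pow_char_pow, Finset.mul_sum]
    refine Finset.sum_congr rfl fun i _ => ?_
    rw [map_mul, map_pow, Units.val_mul, Units.val_pow_eq_pow_val, ← mul_assoc, h i]
    ring
  have hp : p ^ n ≠ 0 := pow_ne_zero _ (Fact.out : p.Prime).ne_zero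
  change ∑ i, d' i * (χ i y : K) = 0 ↔ ∑ i, d i * (χ i (g * y ^ (p ^ n)) : K) = 0
  rw [key, mul_eq_zero, or_iff_right (Units.ne_zero _), pow_eq_zero_iff hp]

lemma SRel.val {Q : ℕ} {g : G} {c c' : ι → Kˣ} (h : SRel χ j Q g c c') (i : ι) :
    vc c i * (χ i g : K) = χ j g * vc c' i ^ Q := by
  have := h i
  have h2 : c i * χ i g = χ j g * c' i ^ Q := by
    rw [this, mul_left_comm, mul_div_cancel]
  simpa [vc] using congrArg Units.val h2

lemma SRel.mem_iff (p : ℕ) [Fact p.Prime] [CharP K p] (n : ℕ) {g : G} {c c' : ι → Kˣ}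
    (h : SRel χ j (p ^ n) g c c') (y : G) :
    y ∈ ZS χ (vc c') ↔ g * y ^ (p ^ n) ∈ ZS χ (vc c) :=
  ZS_general χ j p n (h.val χ j) y

lemma SRel.PP [IsAlgClosed K] (p : ℕ) [Fact p.Prime] [CharP K p]
    (hG : ∀ n : ℕ, Function.Injective (fun x : G => x ^ (p ^ n))) (n : ℕ) {g : G} {c c' : ι → Kˣ}
    (h : SRel χ j (p ^ n) g c c') (hc : PP χ (vc c)) : PP χ (vc c') := by
  intro d' hd'
  have hp : p ^ n ≠ 0 := pow_ne_zero _ (Fact.out : p.Prime).ne_zero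
  let d : ι → K := fun i => χ j g * d' i ^ (p ^ n) * ((χ i g)⁻¹ : Kˣ)
  have hd : ∀ i, d i * (χ i g : K) = χ j g * d' i ^ (p ^ n) := fun i => by simp [d]
  have hnp : ¬ ∃ a : K, ∀ i, d i = a * vc c i := by
    rintro ⟨a, ha⟩
    apply hd'
    obtain ⟨b, hb⟩ := IsAlgClosed.exists_pow_nat_eq a (Nat.pos_of_ne_zero hp)
    refine ⟨b, fun i => ?_⟩
    apply iterateFrobenius_inj K p n
    simp only [iterateFrobenius_def]
    rw [mul_pow, hb]
    have h1 := hd i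
    rw [ha i, mul_assoc, h.val χ j i] at h1
    have : (χ j g : K) ≠ 0 := (χ j g).ne_zero
    apply mul_left_cancel₀ this
    rw [← h1]; ring
  refine Set.Finite.of_injOn (f := fun y => g * y ^ (p ^ n)) ?_ ?_ (hc d hnp)
  · rintro y ⟨h1, h2⟩
    exact ⟨(h.mem_iff χ j p n y).1 h1, (ZS_general χ j p n hd y).1 h2⟩
  · intro a _ b _ hab
    exact hG n (mul_left_cancel hab)

lemma field_of_def (F : Type*) [Field F] [Algebra F K] (K0 : IntermediateField F K) (Γ : Subgroup G)
    (hK0 : ∀ i, ∀ g ∈ Γ, (χ i g : K) ∈ K0) (c : ι → Kˣ) (hc : PP χ (vc c)) (hj : c j = 1)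
    (hinf : ¬ (ZS χ (vc c) ∩ Γ).Finite) (i : ι) : (c i : K) ∈ K0 := by
  by_contra hi
  have h1 : (c i : K) ∉ (Submodule.span K0 {(1 : K)}) := by
    rw [Submodule.mem_span_singleton]
    rintro ⟨a, ha⟩
    apply hi
    rw [← ha, Algebra.smul_def, mul_one]
    exact a.2
  obtain ⟨f, hf, hk⟩ := Submodule.exists_le_ker_of_notMem h1
  have hf1 : f 1 = 0 := hk (Submodule.mem_span_singleton_self 1)
  apply hinf
  refine (hc (fun i => ((f (c i)) : K)) ?_).subset ?_
  · rintro ⟨a, ha⟩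
    have h2 := ha j
    simp only [vc, hj, Units.val_one, hf1, mul_one] at h2
    have h3 := ha i
    rw [← h2] at h3
    simp at h3
    exact hf h3
  · rintro y ⟨hy, hyΓ⟩
    refine ⟨hy, ?_⟩
    have hy' : ∑ i, vc c i * (χ i y : K) = 0 := hy
    have h2 := congrArg f hy'
    rw [map_sum, map_zero] at h2
    have h3 : ∀ i, f (vc c i * (χ i y : K)) = f (c i) * ⟨(χ i y : K), hK0 i y hyΓ⟩ := by
      intro i
      have : vc c i * (χ i y : K) = (⟨(χ i y : K), hK0 i y hyΓ⟩ : K0) • (c i : K) := by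
        rw [Algebra.smul_def, mul_comm]; rfl
      rw [this, map_smul, smul_eq_mul, mul_comm]
    have h4 := congrArg (algebraMap K0 K) h2
    simp only [h3, map_sum, map_mul, map_zero] at h4
    exact h4

lemma state_set (p : ℕ) [Fact p.Prime] [Algebra (ZMod p) K] (m : ℕ) (hm : 1 ≤ m)
    (Γ : Subgroup G) (hΓ : Γ.FG) (R : Set G) (hR : R.Finite) (hRΓ : R ⊆ Γ) (c0 : ι → Kˣ) :
    ∃ K0 : IntermediateField (ZMod p) K, (∀ i, ∀ g ∈ Γ, (χ i g : K) ∈ K0) ∧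
      ∃ C : Set (ι → Kˣ), C.Finite ∧ c0 ∈ C ∧ ∀ c ∈ C, ∀ γ ∈ R, ∀ c', SRel χ j (p ^ m) γ c c' →
        (∀ i, (c' i : K) ∈ K0) → c' ∈ C := by
  obtain ⟨s, hs⟩ := hΓ
  let S : Set K := Set.range (vc c0) ∪ Set.image2 (fun i g => (χ i g : K)) Set.univ (s : Set G)
  have hS : S.Finite := (Set.finite_range _).union (Set.Finite.image2 _ Set.finite_univ s.finite_toSet)
  let K0 := IntermediateField.adjoin (ZMod p) S
  have hess : Algebra.EssFiniteType (ZMod p) K0 := by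
    rw [IntermediateField.essFiniteType_iff]
    exact ⟨hS.toFinset, by simp [K0]⟩
  have hχ : ∀ i, ∀ g ∈ Γ, (χ i g : K) ∈ K0 := by
    intro i g hg
    rw [← hs] at hg
    induction hg using Subgroup.closure_induction with
    | mem g hg => exact IntermediateField.subset_adjoin _ _ (Or.inr ⟨i, trivial, g, hg, rfl⟩)
    | one => simp
    | mul a b _ _ ha hb => rw [map_mul, Units.val_mul]; exact K0.mul_mem ha hb
    | inv a _ ha => rw [map_inv, Units.val_inv_eq_inv_val]; exact K0.inv_mem ha
  have hlift : ∀ x : Kˣ, (x : K) ∈ K0 → ∃ x' : K0ˣ, Units.map (K0.val : K0 →* K) x' = x := by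
    intro x hx
    refine ⟨Units.mk0 ⟨x, hx⟩ ?_, ?_⟩
    · intro h; exact x.ne_zero (congrArg Subtype.val h)
    · ext; rfl
  have hinj : Function.Injective (Units.map (K0.val : K0 →* K)) := by
    intro a b h
    ext
    exact congrArg Units.val h
  refine ⟨K0, hχ, ?_⟩
  have hc0 : ∀ i, ∃ x' : K0ˣ, Units.map (K0.val : K0 →* K) x' = c0 i := fun i =>
    hlift _ (IntermediateField.subset_adjoin _ _ (Or.inl ⟨i, rfl⟩))
  choose u hu using hc0
  have hE := fun i => finite_closure_field (L := K0) p m hm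
    ((Units.map (K0.val : K0 →* K)) ⁻¹' ((fun γ => χ i γ / χ j γ) '' R))
    ((hR.image _).preimage hinj.injOn) (u i)
  choose E hEf hEu hE using hE
  refine ⟨Set.pi Set.univ (fun i => (Units.map (K0.val : K0 →* K)) '' (E i)),
    Set.Finite.pi' (fun i => (hEf i).image _) |>.subset (fun c hc i => hc i trivial), ?_, ?_⟩
  · intro i _; exact ⟨u i, hEu i, hu i⟩
  · intro c hc γ hγ c' hrel hc' i _
    obtain ⟨e, he, hce⟩ := hc i trivial
    obtain ⟨v, hv⟩ := hlift _ (hc' i)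
    have hm1 : ((χ i γ / χ j γ : Kˣ) : K) ∈ K0 := by
      rw [Units.val_div_eq_div_val]
      exact K0.div_mem (hχ i γ (hRΓ hγ)) (hχ j γ (hRΓ hγ))
    obtain ⟨w, hw⟩ := hlift _ hm1
    refine ⟨v, hE i e he w ⟨γ, hγ, hw.symm⟩ v ?_, hv⟩
    apply hinj
    rw [map_pow, map_mul, hv, hce, hw]
    exact hrel i

lemma tree {S : Type*} (D : Set S) (hD : D.Finite) (r : S → S → Prop) (P : S → Prop)
    (hstep : ∀ c ∈ D, (∀ c' ∈ D, r c c' → P c') → P c)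
    (hcyc : ∀ c ∈ D, Relation.TransGen r c c → P c) : ∀ c ∈ D, P c := by
  intro c hc
  by_contra hP
  have hnext : ∀ x : {x // x ∈ D ∧ ¬ P x}, ∃ y : {x // x ∈ D ∧ ¬ P x}, r x y := by
    rintro ⟨x, hx, hPx⟩
    by_contra! h
    exact hPx (hstep x hx fun c' hc' hr => by_contra fun hn => h ⟨c', hc', hn⟩ hr)
  choose nx hnx using hnext
  let it : ℕ → {x // x ∈ D ∧ ¬ P x} := fun n => nx^[n] ⟨c, hc, hP⟩
  have hfin : Finite {x // x ∈ D ∧ ¬ P x} := (hD.subset (fun x hx => hx.1 : {x | x ∈ D ∧ ¬ P x} ⊆ D)).to_subtype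
  obtain ⟨a, b, hab, heq⟩ := Finite.exists_ne_map_eq_of_infinite it
  have hlt : ∀ a b, a < b → Relation.TransGen r (it a : S) (it b) := by
    intro a b hab
    induction b, hab using Nat.le_induction with
    | base => 
      apply Relation.TransGen.single
      simp only [it, Function.iterate_succ_apply']
      exact hnx _
    | succ n _ ih =>
      apply ih.tail
      simp only [it, Function.iterate_succ_apply']
      exact hnx _
  rcases lt_or_gt_of_ne hab with h | h
  · have := hlt a b h
    rw [← heq] at this
    exact (it a).2.2 (hcyc _ (it a).2.1 this)
  · have := hlt b a h
    rw [heq] at this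
    exact (it b).2.2 (hcyc _ (it b).2.1 this)

lemma exists_step [IsAlgClosed K] (Q : ℕ) (hQ : 0 < Q) (g : G) (c : ι → Kˣ) :
    ∃ c', SRel χ j Q g c c' := by
  have : ∀ x : Kˣ, ∃ y : Kˣ, y ^ Q = x := by
    intro x
    obtain ⟨y, hy⟩ := IsAlgClosed.exists_pow_nat_eq (x : K) hQ
    have hy0 : y ≠ 0 := by
      rintro rfl
      rw [zero_pow hQ.ne'] at hy
      exact x.ne_zero hy.symm
    exact ⟨Units.mk0 y hy0, by ext; simpa using hy⟩
  choose f hf using this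
  exact ⟨fun i => f (c i * (χ i g / χ j g)), fun i => hf _⟩

lemma descend [IsAlgClosed K] (p : ℕ) [Fact p.Prime] [CharP K p]
    (hG : ∀ n : ℕ, Function.Injective (fun x : G => x ^ (p ^ n))) (m : ℕ) 
    (Γ : Subgroup G) (R : Set G) (hRΓ : R ⊆ Γ)
    (hR : ∀ x ∈ Γ, ∃ γ ∈ R, ∃ y ∈ Γ, x = γ * y ^ (p ^ m))
    (c : ι → Kˣ) (hj : c j = 1) (hc : PP χ (vc c)) :
    ∃ c' : G → ι → Kˣ, (∀ γ, SRel χ j (p ^ m) γ c (c' γ) ∧ PP χ (vc (c' γ)) ∧ c' γ j = 1) ∧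
      ZS χ (vc c) ∩ Γ = ⋃ γ ∈ R, (fun y => γ * y ^ (p ^ m)) '' (ZS χ (vc (c' γ)) ∩ Γ) := by
  have hp : 0 < p ^ m := pow_pos (Fact.out : p.Prime).pos _
  choose c' hc' using fun γ => exists_step χ j (p ^ m) hp γ c
  refine ⟨c', fun γ => ⟨hc' γ, (hc' γ).PP χ j p hG m hc, ?_⟩, ?_⟩
  · apply units_pow_inj p m
    have := hc' γ j
    simp only [one_pow]
    rw [this, hj]; simp
  · ext x
    simp only [Set.mem_inter_iff, Set.mem_iUnion, Set.mem_image, SetLike.mem_coe, exists_prop]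
    constructor
    · rintro ⟨hx, hxΓ⟩
      obtain ⟨γ, hγ, y, hy, rfl⟩ := hR x hxΓ
      exact ⟨γ, hγ, y, ⟨((hc' γ).mem_iff χ j p m y).2 hx, hy⟩, rfl⟩
    · rintro ⟨γ, hγ, y, ⟨hy, hyΓ⟩, rfl⟩
      exact ⟨((hc' γ).mem_iff χ j p m y).1 hy, Γ.mul_mem (hRΓ hγ) (Γ.pow_mem hyΓ _)⟩

lemma trans_rel (q : ℕ) (Γ : Subgroup G) (R : Set G) (hRΓ : R ⊆ Γ) {c c' : ι → Kˣ}
    (h : Relation.TransGen (fun c c' => ∃ γ ∈ R, SRel χ j q γ c c') c c') :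
    ∃ n : ℕ, 1 ≤ n ∧ ∃ g ∈ Γ, SRel χ j (q ^ n) g c c' := by
  induction h with
  | single h =>
    obtain ⟨γ, hγ, h⟩ := h
    exact ⟨1, le_rfl, γ, hRΓ hγ, by simpa using h⟩
  | tail _ h ih =>
    obtain ⟨γ, hγ, h⟩ := h
    obtain ⟨n, hn, g, hg, h'⟩ := ih
    exact ⟨n + 1, by omega, _, Γ.mul_mem hg (Γ.pow_mem (hRΓ hγ) _), by
      rw [pow_succ]; exact h'.comp χ j h⟩

end

lemma pw_succ {G : Type*} [Monoid G] (a : G) (P n : ℕ) : (a ^ (P ^ n)) ^ P = a ^ (P ^ (n + 1)) := by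
  rw [← pow_mul, ← pow_succ]

lemma pw_add {G : Type*} [Monoid G] (a : G) (P k n : ℕ) :
    (a ^ (P ^ k)) ^ (P ^ n) = a ^ (P ^ (k + n)) := by
  rw [← pow_mul, ← pow_add]

/-- orbit sets `α₀ F^n(α)` inside `Γ` -/
def OrbSet {G : Type*} [CommGroup G] (p : ℕ) (Γ : Subgroup G) (S : Set G) : Prop :=
  S ⊆ Γ ∧ ∃ m : ℕ, 1 ≤ m ∧ ∃ α₀ α : G, S = {g | ∃ n : ℕ, g = α₀ * α ^ ((p ^ m) ^ n)}

/-- finite unions of orbit sets -/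
def Gd {G : Type*} [CommGroup G] (p : ℕ) (Γ : Subgroup G) (T : Set G) : Prop :=
  ∃ 𝒯 : Set (Set G), 𝒯.Finite ∧ (∀ S ∈ 𝒯, OrbSet p Γ S) ∧ T = ⋃₀ 𝒯

section
variable {G : Type*} [CommGroup G] {p : ℕ} {Γ : Subgroup G}

lemma Gd.biUnion {I : Type*} (s : Set I) (hs : s.Finite) (T : I → Set G)
    (h : ∀ i ∈ s, Gd p Γ (T i)) : Gd p Γ (⋃ i ∈ s, T i) := by
  choose! 𝒯 h1 h2 h3 using h
  refine ⟨⋃ i ∈ s, 𝒯 i, hs.biUnion h1, ?_, ?_⟩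
  · intro S hS
    simp only [Set.mem_iUnion] at hS
    obtain ⟨i, hi, hS⟩ := hS
    exact h2 i hi S hS
  · ext x
    simp only [Set.mem_iUnion, Set.mem_sUnion]
    constructor
    · rintro ⟨i, hi, hx⟩
      rw [h3 i hi] at hx
      obtain ⟨S, hS, hx⟩ := hx
      exact ⟨S, ⟨i, hi, hS⟩, hx⟩
    · rintro ⟨S, ⟨i, hi, hS⟩, hx⟩
      exact ⟨i, hi, by rw [h3 i hi]; exact ⟨S, hS, hx⟩⟩

lemma Gd.of_orb {S : Set G} (h : OrbSet p Γ S) : Gd p Γ S :=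
  ⟨{S}, Set.finite_singleton _, by simpa using h, by simp⟩

lemma Gd.empty : Gd p Γ (∅ : Set G) := ⟨∅, Set.finite_empty, by simp, by simp⟩

lemma Gd.of_finite {T : Set G} (hT : T.Finite) (h : T ⊆ Γ) : Gd p Γ T := by
  have : T = ⋃ x ∈ T, {x} := by simp
  rw [this]
  apply Gd.biUnion T hT
  intro x hx
  apply Gd.of_orb
  exact ⟨by simpa using h hx, 1, le_rfl, x, 1, by ext; simp⟩

lemma Gd.image {T : Set G} (h : Gd p Γ T) (f : G → G) (β : G) (Q : ℕ) (hf : ∀ y, f y = β * y ^ Q)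
    {Γ' : Subgroup G} (hΓ : ∀ y ∈ T, f y ∈ Γ') : Gd p Γ' (f '' T) := by
  obtain ⟨𝒯, h1, h2, rfl⟩ := h
  refine ⟨(fun S => f '' S) '' 𝒯, h1.image _, ?_, ?_⟩
  · rintro _ ⟨S, hS, rfl⟩
    obtain ⟨hSΓ, m, hm, α₀, α, rfl⟩ := h2 S hS
    refine ⟨?_, m, hm, β * α₀ ^ Q, α ^ Q, ?_⟩
    · rintro _ ⟨y, hy, rfl⟩
      exact hΓ _ ⟨_, hS, hy⟩
    · ext x
      constructor
      · rintro ⟨_, ⟨n, rfl⟩, rfl⟩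
        refine ⟨n, ?_⟩
        rw [hf, mul_pow, pow_right_comm α Q, mul_assoc]
      · rintro ⟨n, rfl⟩
        refine ⟨_, ⟨n, rfl⟩, ?_⟩
        rw [hf, mul_pow, pow_right_comm α Q, mul_assoc]
  · rw [Set.sUnion_eq_biUnion, Set.image_iUnion₂, Set.sUnion_image]

end

section
variable {K G ι : Type*} [Field K] [CommGroup G] [Fintype ι] (χ : ι → G →* Kˣ) (j : ι)
variable [IsAlgClosed K] (p : ℕ) [Fact p.Prime] [CharP K p] [Algebra (ZMod p) K]

lemma finite_nonpowers
    (hG : ∀ n : ℕ, Function.Injective (fun x : G => x ^ (p ^ n)))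
    (hstab : ∀ g : G, (∀ i, χ i g = χ j g) → IsOfFinOrder g)
    (Γ : Subgroup G) (hΓ : Γ.FG) (m : ℕ) (hm : 1 ≤ m) (d : ι → Kˣ) (hd : PP χ (vc d))
    (hdj : d j = 1) (hdq : ∀ i, d i ^ (p ^ m) = d i) :
    {x | x ∈ ZS χ (vc d) ∩ Γ ∧ ¬ ∃ y ∈ Γ, y ^ (p ^ m) = x}.Finite := by
  have hq : 1 ≤ p ^ m := pow_pos (Fact.out : p.Prime).pos _
  obtain ⟨R, hRf, hRΓ, hR⟩ := fin_reps Γ hΓ (p ^ m) hq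
  obtain ⟨K0, hK0, C, hCf, hdC, hC⟩ := state_set χ j p m hm Γ hΓ R hRf hRΓ d
  let D : Set (ι → Kˣ) := {c | c ∈ C ∧ PP χ (vc c) ∧ c j = 1 ∧ ∃ l : ℕ, 1 ≤ l ∧ ∃ g ∈ Γ,
    (¬ ∃ y ∈ Γ, y ^ (p ^ m) = g) ∧ SRel χ j ((p ^ m) ^ l) g d c}
  have hDf : D.Finite := hCf.subset fun c hc => hc.1
  have hdqn : ∀ n i, d i ^ ((p ^ m) ^ n) = d i := by
    intro n i
    induction n with
    | zero => simp
    | succ n ih => rw [pow_succ, pow_mul, ih, hdq]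
  have hfin : ∀ c ∈ D, (ZS χ (vc c) ∩ Γ).Finite := by
    apply tree D hDf (fun c c' => ∃ γ ∈ R, SRel χ j (p ^ m) γ c c')
    · rintro c ⟨hcC, hcP, hcj, l, hl, g, hg, hgp, hrel⟩ hc
      obtain ⟨c', hc', heq⟩ := descend χ j p hG m Γ R hRΓ hR c hcj hcP
      rw [heq]
      refine hRf.biUnion fun γ hγ => Set.Finite.image _ ?_
      by_contra hinf
      obtain ⟨h1, h2, h3⟩ := hc' γ
      apply hinf
      refine hc (c' γ) ⟨?_, h2, h3, l + 1, by omega, g * γ ^ ((p ^ m) ^ l),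
        Γ.mul_mem hg (Γ.pow_mem (hRΓ hγ) _), ?_, ?_⟩ ⟨γ, hγ, h1⟩
      · exact hC c hcC γ hγ _ h1 (field_of_def χ j (ZMod p) K0 Γ hK0 _ h2 h3 hinf)
      · rintro ⟨y, hy, hyg⟩
        apply hgp
        obtain ⟨l', rfl⟩ : ∃ l', l = l' + 1 := ⟨l - 1, by omega⟩
        refine ⟨y * (γ ^ ((p ^ m) ^ l'))⁻¹, Γ.mul_mem hy (Γ.inv_mem (Γ.pow_mem (hRΓ hγ) _)), ?_⟩
        rw [mul_pow, hyg, inv_pow, pw_succ, mul_inv_cancel_right]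
      · rw [pow_succ]; exact hrel.comp χ j h1
    · rintro c ⟨hcC, hcP, hcj, l, hl, g, hg, hgp, hrel⟩ hcyc
      exfalso
      obtain ⟨n, hn, g', hg', hrel'⟩ := trans_rel χ j (p ^ m) Γ R hRΓ hcyc
      have h2 := hrel.comp χ j hrel'
      let τ := g * g' ^ ((p ^ m) ^ l) / g ^ ((p ^ m) ^ n)
      have hτ : IsOfFinOrder τ := by
        apply hstab
        intro i
        have e1 := h2 i
        rw [pow_mul, hrel i, mul_pow, hdqn, mul_left_cancel_iff, div_pow, ← map_pow, ← map_pow,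
          div_eq_div_iff_mul_eq_mul] at e1
        simp only [τ, map_div]
        rw [div_eq_div_iff_mul_eq_mul, ← e1, mul_comm]
      obtain ⟨t, ht, hte⟩ := tors_root _ (hG m) τ hτ
      have hτΓ : τ ∈ Γ := Γ.div_mem (Γ.mul_mem hg (Γ.pow_mem hg' _)) (Γ.pow_mem hg _)
      have htΓ : t ∈ Γ := by
        obtain ⟨z, hz⟩ := ht
        rw [← hz]; exact Γ.zpow_mem hτΓ _
      apply hgp
      obtain ⟨l', rfl⟩ : ∃ l', l = l' + 1 := ⟨l - 1, by omega⟩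
      obtain ⟨n', rfl⟩ : ∃ l', n = l' + 1 := ⟨n - 1, by omega⟩
      refine ⟨t * g ^ ((p ^ m) ^ n') / g' ^ ((p ^ m) ^ l'), Γ.div_mem (Γ.mul_mem htΓ (Γ.pow_mem hg _)) (Γ.pow_mem hg' _), ?_⟩
      rw [div_pow, mul_pow, hte, pw_succ, pw_succ]
      simp [τ]
  obtain ⟨c', hc', heq⟩ := descend χ j p hG m Γ R hRΓ hR d hdj hd
  refine (hRf.biUnion (t := fun γ => {x | x ∈ (fun y => γ * y ^ (p ^ m)) '' (ZS χ (vc (c' γ)) ∩ Γ) ∧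
    ¬ ∃ y ∈ Γ, y ^ (p ^ m) = x}) ?_).subset ?_
  · intro γ hγ
    by_cases hγp : ∃ y ∈ Γ, y ^ (p ^ m) = γ
    · convert! Set.finite_empty
      rw [Set.eq_empty_iff_forall_notMem]
      rintro _ ⟨⟨y, hy, rfl⟩, hn⟩
      obtain ⟨z, hz, rfl⟩ := hγp
      exact hn ⟨z * y, Γ.mul_mem hz hy.2, mul_pow _ _ _⟩
    · refine Set.Finite.subset (Set.Finite.image (fun y => γ * y ^ (p ^ m)) (s := ZS χ (vc (c' γ)) ∩ Γ) ?_) (fun x hx => hx.1)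
      by_contra hinf
      obtain ⟨h1, h2, h3⟩ := hc' γ
      apply hinf
      refine hfin _ ⟨?_, h2, h3, 1, le_rfl, γ, hRΓ hγ, hγp, by simpa using h1⟩
      exact hC d hdC γ hγ _ h1 (field_of_def χ j (ZMod p) K0 Γ hK0 _ h2 h3 hinf)
  · rintro x ⟨hx, hn⟩
    rw [heq] at hx
    simp only [Set.mem_iUnion] at hx ⊢
    obtain ⟨γ, hγ, hx⟩ := hx
    exact ⟨γ, hγ, hx, hn⟩

lemma recurrent_good
    (hG : ∀ n : ℕ, Function.Injective (fun x : G => x ^ (p ^ n)))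
    (hstab : ∀ g : G, (∀ i, χ i g = χ j g) → IsOfFinOrder g)
    (Γ : Subgroup G) (hΓ : Γ.FG) (hroot : ∀ n : ℕ, 0 < n → ∀ g : G, ∃ h, h ^ n = g)
    (m : ℕ) (hm : 1 ≤ m) (c : ι → Kˣ) (hc : PP χ (vc c))
    (hcj : c j = 1) (g : G) (hg : g ∈ Γ) (hrel : SRel χ j (p ^ m) g c c) :
    Gd p Γ (ZS χ (vc c) ∩ Γ) := by
  have hq : 2 ≤ p ^ m := by
    calc 2 ≤ p := (Fact.out : p.Prime).two_le
      _ = p ^ 1 := by simp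
      _ ≤ p ^ m := Nat.pow_le_pow_right (Fact.out : p.Prime).pos hm
  obtain ⟨h, hh⟩ := hroot (p ^ m - 1) (by omega) g
  have hhq : h ^ (p ^ m) = h * g := by
    rw [← hh, ← pow_succ']; congr 1; omega
  let d : ι → Kˣ := fun i => c i * (χ i h⁻¹ / χ j h⁻¹)
  have hcd : SRel χ j (p ^ 0) h⁻¹ c d := fun i => by simp [d]
  have hdP : PP χ (vc d) := hcd.PP χ j p hG 0 hc
  have hdj : d j = 1 := by simp [d, hcj]
  have hdq : ∀ i, d i ^ (p ^ m) = d i := by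
    intro i
    simp only [d]
    rw [mul_pow, hrel i, div_pow, ← map_pow, ← map_pow, inv_pow, hhq]
    simp only [map_inv, map_mul]
    simp only [div_eq_mul_inv, mul_inv, inv_inv]
    have e : χ i g * (χ i g)⁻¹ = 1 := mul_inv_cancel _
    have e2 : χ j g * (χ j g)⁻¹ = 1 := mul_inv_cancel _
    calc c i * (χ i g * (χ j g)⁻¹) * ((χ i h)⁻¹ * (χ i g)⁻¹ * (χ j h * χ j g)) 
        = c i * ((χ i h)⁻¹ * χ j h) * (χ i g * (χ i g)⁻¹) * (χ j g * (χ j g)⁻¹) := by 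
          ac_rfl
      _ = _ := by rw [e, e2, mul_one, mul_one]
  have hmem : ∀ y, y ∈ ZS χ (vc d) ↔ h⁻¹ * y ∈ ZS χ (vc c) := by
    intro y
    have := hcd.mem_iff χ j p 0 y
    simpa using this
  have hdd : SRel χ j (p ^ m) 1 d d := fun i => by rw [hdq]; simp
  have hmemq : ∀ y, y ∈ ZS χ (vc d) ↔ y ^ (p ^ m) ∈ ZS χ (vc d) := by
    intro y
    simpa using hdd.mem_iff χ j p m y
  have hmemqn : ∀ n y, y ∈ ZS χ (vc d) ↔ y ^ ((p ^ m) ^ n) ∈ ZS χ (vc d) := by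
    intro n y
    induction n with
    | zero => simp
    | succ n ih => rw [ih, hmemq, pow_succ, pow_mul]
  let Γ' : Subgroup G := Γ ⊔ Subgroup.zpowers h
  have hΓ' : Γ'.FG := hΓ.sup ⟨{h}, by simp [Subgroup.zpowers_eq_closure]⟩
  have hΓΓ' : Γ ≤ Γ' := le_sup_left
  have hhΓ' : h ∈ Γ' := (le_sup_right : _ ≤ Γ') (Subgroup.mem_zpowers h)
  have hA := finite_nonpowers χ j p hG hstab Γ' hΓ' m hm d hdP hdj hdq
  set A := {x | x ∈ ZS χ (vc d) ∩ Γ' ∧ ¬ ∃ y ∈ Γ', y ^ (p ^ m) = x} with hAdef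
  let T := {x | x ∈ Γ' ∧ IsOfFinOrder x}
  have hT : T.Finite := tors_finite Γ' hΓ'
  let A' := A ∪ (T ∩ ZS χ (vc d))
  have hA' : A'.Finite := hA.union (hT.subset Set.inter_subset_left)
  have hA'Z : ∀ α ∈ A', α ∈ ZS χ (vc d) := by
    rintro α (hα | hα)
    · exact hα.1.1
    · exact hα.2
  have hstable : ∀ x, h⁻¹ * x ∈ Γ → h⁻¹ * x ^ (p ^ m) ∈ Γ := by
    intro x hx
    have : h⁻¹ * x ^ (p ^ m) = g * (h⁻¹ * x) ^ (p ^ m) := by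
      rw [mul_pow, inv_pow, hhq, mul_inv]
      rw [mul_comm h⁻¹ g⁻¹, mul_assoc, mul_inv_cancel_left]
    rw [this]
    exact Γ.mul_mem hg (Γ.pow_mem hx _)
  have hstablen : ∀ n x, h⁻¹ * x ∈ Γ → h⁻¹ * x ^ ((p ^ m) ^ n) ∈ Γ := by
    intro n x hx
    induction n with
    | zero => simpa using hx
    | succ n ih => rw [pow_succ, pow_mul]; exact hstable _ ih
  have hdecomp : ZS χ (vc c) ∩ Γ = ⋃ α ∈ A', {x | x ∈ Γ ∧ ∃ n : ℕ, x = h⁻¹ * α ^ ((p ^ m) ^ n)} := by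
    ext x
    simp only [Set.mem_iUnion, exists_prop]
    constructor
    · rintro ⟨hx, hxΓ⟩
      have hxΓ : x ∈ Γ := hxΓ
      have hy : h * x ∈ ZS χ (vc d) := by rw [hmem]; simpa using hx
      have hyΓ : h * x ∈ Γ' := Γ'.mul_mem hhΓ' (hΓΓ' hxΓ)
      by_cases hdiv : ∀ n : ℕ, ∃ y ∈ Γ', y ^ ((p ^ m) ^ n) = h * x
      · exact ⟨h * x, Or.inr ⟨⟨hyΓ, inf_div_tors Γ' hΓ' _ hq _ hdiv⟩, hy⟩, hxΓ, 0, by simp⟩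
      · push Not at hdiv
        classical
        have hn0 := Nat.find_spec hdiv
        have hmin := fun k => Nat.find_min hdiv (m := k)
        set n := Nat.find hdiv
        have hn : n ≠ 0 := by
          intro h0
          rw [h0] at hn0
          exact hn0 _ hyΓ (by simp)
        obtain ⟨n', hn'⟩ : ∃ n', n = n' + 1 := ⟨n - 1, by omega⟩
        have h1 := hmin n' (by omega)
        push Not at h1
        obtain ⟨y, hyΓ', hyx⟩ := h1
        refine ⟨y, Or.inl ⟨⟨?_, hyΓ'⟩, ?_⟩, hxΓ, n', ?_⟩
        · rw [hmemqn n', hyx]; exact hy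
        · rintro ⟨z, hz, hzy⟩
          apply hn0 z hz
          rw [hn', pow_succ', pow_mul, hzy, hyx]
        · rw [hyx]; simp
    · rintro ⟨α, hα, hxΓ, n, rfl⟩
      refine ⟨?_, hxΓ⟩
      rw [← hmem, ← hmemqn]
      exact hA'Z α hα
  rw [hdecomp]
  apply Gd.biUnion A' hA'
  intro α _
  by_cases hex : ∃ n : ℕ, h⁻¹ * α ^ ((p ^ m) ^ n) ∈ Γ
  · classical
    have hn0 := Nat.find_spec hex
    have hmin := fun k => Nat.find_min hex (m := k)
    set n0 := Nat.find hex
    apply Gd.of_orb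
    refine ⟨fun x hx => hx.1, m, hm, h⁻¹, α ^ ((p ^ m) ^ n0), ?_⟩
    ext x
    constructor
    · rintro ⟨hx, n, rfl⟩
      have : n0 ≤ n := by
        by_contra hlt
        exact hmin n (by omega) hx
      refine ⟨n - n0, ?_⟩
      rw [pw_add]; congr 3; omega
    · rintro ⟨n, rfl⟩
      refine ⟨hstablen n _ hn0, n0 + n, ?_⟩
      rw [pw_add]
  · convert! Gd.empty
    rw [Set.eq_empty_iff_forall_notMem]
    rintro x ⟨hx, n, rfl⟩
    exact hex ⟨n, hx⟩

lemma core
    (hG : ∀ n : ℕ, Function.Injective (fun x : G => x ^ (p ^ n)))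
    (hstab : ∀ g : G, (∀ i, χ i g = χ j g) → IsOfFinOrder g)
    (Γ : Subgroup G) (hΓ : Γ.FG) (hroot : ∀ n : ℕ, 0 < n → ∀ g : G, ∃ h, h ^ n = g)
    (c0 : ι → Kˣ) (hc0 : PP χ (vc c0)) (hc0j : c0 j = 1) : Gd p Γ (ZS χ (vc c0) ∩ Γ) := by
  have hq : 1 ≤ p ^ 1 := pow_pos (Fact.out : p.Prime).pos _
  obtain ⟨R, hRf, hRΓ, hR⟩ := fin_reps Γ hΓ (p ^ 1) hq
  obtain ⟨K0, hK0, C, hCf, hdC, hC⟩ := state_set χ j p 1 le_rfl Γ hΓ R hRf hRΓ c0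
  let D : Set (ι → Kˣ) := {c | c ∈ C ∧ PP χ (vc c) ∧ c j = 1}
  have hDf : D.Finite := hCf.subset fun c hc => hc.1
  refine tree D hDf (fun c c' => ∃ γ ∈ R, SRel χ j (p ^ 1) γ c c')
    (fun c => Gd p Γ (ZS χ (vc c) ∩ Γ)) ?_ ?_ c0 ⟨hdC, hc0, hc0j⟩
  · rintro c ⟨hcC, hcP, hcj⟩ hc
    obtain ⟨c', hc', heq⟩ := descend χ j p hG 1 Γ R hRΓ hR c hcj hcP
    rw [heq]
    refine Gd.biUnion R hRf _ fun γ hγ => ?_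
    refine Gd.image (Γ := Γ) ?_ _ γ (p ^ 1) (fun y => rfl) (fun y hy => Γ.mul_mem (hRΓ hγ) (Γ.pow_mem hy.2 _))
    obtain ⟨h1, h2, h3⟩ := hc' γ
    by_cases hinf : (ZS χ (vc (c' γ)) ∩ Γ).Finite
    · exact Gd.of_finite hinf Set.inter_subset_right
    · exact hc (c' γ) ⟨hC c hcC γ hγ _ h1 (field_of_def χ j (ZMod p) K0 Γ hK0 _ h2 h3 hinf), h2, h3⟩
        ⟨γ, hγ, h1⟩
  · rintro c ⟨hcC, hcP, hcj⟩ hcyc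
    obtain ⟨n, hn, g, hg, hrel⟩ := trans_rel χ j (p ^ 1) Γ R hRΓ hcyc
    rw [pow_one] at hrel
    exact recurrent_good χ j p hG hstab Γ hΓ hroot n hn c hcP hcj g hg hrel

end

lemma ker_eval_isMax {K : Type*} [Field K] (z : Fin 2 → K) :
    (RingHom.ker (MvPolynomial.eval z)).IsMaximal :=
  RingHom.ker_isMaximal_of_surjective _ (fun a => ⟨MvPolynomial.C a, by simp⟩)

lemma ker_eval_inj {K : Type*} [Field K] (z w : Fin 2 → K)
    (h : RingHom.ker (MvPolynomial.eval z) = RingHom.ker (MvPolynomial.eval w)) : z = w := by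
  funext i
  have h1 : (MvPolynomial.X i - MvPolynomial.C (z i) : MvPolynomial (Fin 2) K) ∈
      RingHom.ker (MvPolynomial.eval z) := by simp [RingHom.mem_ker]
  rw [h, RingHom.mem_ker] at h1
  simp only [map_sub, MvPolynomial.eval_X, MvPolynomial.eval_C, sub_eq_zero] at h1
  exact h1.symm

lemma finite_inter {K : Type*} [Field K] (f g : MvPolynomial (Fin 2) K) (hf : Irreducible f)
    (hg : ¬ f ∣ g) :
    {z : Fin 2 → K | MvPolynomial.eval z f = 0 ∧ MvPolynomial.eval z g = 0}.Finite := by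
  have hprime : Prime f := UniqueFactorizationMonoid.irreducible_iff_prime.mp hf
  have hfin := Ideal.finite_minimalPrimes_of_isNoetherianRing (MvPolynomial (Fin 2) K)
    (Ideal.span {f, g})
  refine Set.Finite.of_finite_image (f := fun z => RingHom.ker (MvPolynomial.eval z))
    (hfin.subset ?_) (fun z _ w _ h => ker_eval_inj z w h)
  rintro _ ⟨z, ⟨hz1, hz2⟩, rfl⟩
  have hmax := ker_eval_isMax z
  have hpr := hmax.isPrime
  have hle : Ideal.span {f, g} ≤ RingHom.ker (MvPolynomial.eval z) := by
    rw [Ideal.span_le]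
    rintro x (rfl | rfl)
    · exact hz1
    · exact hz2
  obtain ⟨P, hP, hPle⟩ := Ideal.exists_minimalPrimes_le hle
  by_cases heq : P = RingHom.ker (MvPolynomial.eval z)
  · simp only
    rw [← heq]; exact hP
  exfalso
  have hlt := lt_of_le_of_ne hPle heq
  have hPp : P.IsPrime := hP.1.1
  have hfp : (Ideal.span {f}).IsPrime := (Ideal.span_singleton_prime hprime.ne_zero).2 hprime
  have hfP : Ideal.span {f} < P := by
    refine lt_of_le_of_ne ?_ ?_
    · rw [Ideal.span_singleton_le_iff_mem]
      exact hP.1.2 (Ideal.subset_span (by simp))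
    · intro h
      apply hg
      rw [← Ideal.mem_span_singleton, h]
      exact hP.1.2 (Ideal.subset_span (by simp))
  have h0 : (⊥ : Ideal (MvPolynomial (Fin 2) K)) < Ideal.span {f} := by
    rw [bot_lt_iff_ne_bot, Ne, Ideal.span_singleton_eq_bot]
    exact hprime.ne_zero
  have hbp : (⊥ : Ideal (MvPolynomial (Fin 2) K)).IsPrime := Ideal.isPrime_bot
  have e1 := Ideal.height_add_one_le_of_lt_of_isPrime h0
  have e2 := Ideal.height_add_one_le_of_lt_of_isPrime hfP
  have e3 := Ideal.height_add_one_le_of_lt_of_isPrime hlt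
  have e4 := Ideal.height_le_ringKrullDim_of_isPrime (I := RingHom.ker (MvPolynomial.eval z))
  rw [MvPolynomial.ringKrullDim_of_isNoetherianRing, ringKrullDim_eq_zero_of_field] at e4
  have e5 : (RingHom.ker (MvPolynomial.eval z)).height ≤ 2 := by
    simp only [Nat.card_eq_fintype_card, Fintype.card_fin, zero_add] at e4
    exact WithBot.coe_le_coe.1 e4
  have e6 : (0 : ℕ∞) + 1 + 1 + 1 ≤ 2 :=
    (add_le_add_left ((add_le_add_left ((add_le_add_left zero_le 1).trans e1) 1).trans e2) 1).trans
      (e3.trans e5)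
  exact absurd e6 (by decide)

/-- monomial character -/
def mon (K : Type*) [Field K] (i : Fin 2 →₀ ℕ) : Kˣ × Kˣ →* Kˣ :=
  (powMonoidHom (i 0)).comp (MonoidHom.fst Kˣ Kˣ) * (powMonoidHom (i 1)).comp (MonoidHom.snd Kˣ Kˣ)

lemma mon_apply {K : Type*} [Field K] (i : Fin 2 →₀ ℕ) (g : Kˣ × Kˣ) :
    mon K i g = g.1 ^ (i 0) * g.2 ^ (i 1) := rfl

section
variable {K : Type*} [Field K]

lemma eval_mon (f : MvPolynomial (Fin 2) K) (g : Kˣ × Kˣ) :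
    MvPolynomial.eval ![(g.1 : K), (g.2 : K)] f =
      ∑ i : f.support, f.coeff i * (mon K (i : Fin 2 →₀ ℕ) g : K) := by
  rw [MvPolynomial.eval_eq', Finset.univ_eq_attach,
    Finset.sum_attach f.support (fun i => f.coeff i * (mon K i g : K))]
  refine Finset.sum_congr rfl fun i _ => ?_
  simp [Fin.prod_univ_two, mon_apply]

lemma pt_inj : Function.Injective (fun g : Kˣ × Kˣ => (![(g.1 : K), (g.2 : K)] : Fin 2 → K)) := by
  intro g h e
  have e0 := congrFun e 0
  have e1 := congrFun e 1
  simp at e0 e1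
  exact Prod.ext (Units.ext e0) (Units.ext e1)

lemma finite_inter_torus (f g : MvPolynomial (Fin 2) K) (hf : Irreducible f) (hg : ¬ f ∣ g) :
    {z : Kˣ × Kˣ | MvPolynomial.eval ![(z.1 : K), (z.2 : K)] f = 0 ∧
      MvPolynomial.eval ![(z.1 : K), (z.2 : K)] g = 0}.Finite :=
  (finite_inter f g hf hg).preimage pt_inj.injOn

lemma PP_poly (f : MvPolynomial (Fin 2) K) (hf : Irreducible f) :
    PP (fun i : f.support => mon K (i : Fin 2 →₀ ℕ)) (fun i => f.coeff i) := by
  intro d hd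
  let D : MvPolynomial (Fin 2) K := ∑ i : f.support, MvPolynomial.monomial (i : Fin 2 →₀ ℕ) (d i)
  have hDeval : ∀ g : Kˣ × Kˣ, MvPolynomial.eval ![(g.1 : K), (g.2 : K)] D =
      ∑ i : f.support, d i * (mon K (i : Fin 2 →₀ ℕ) g : K) := by
    intro g
    simp only [D, map_sum]
    refine Finset.sum_congr rfl fun i _ => ?_
    rw [MvPolynomial.eval_monomial, Finsupp.prod_fintype _ _ (by simp)]
    simp [Fin.prod_univ_two, mon_apply]
  have hcoeff : ∀ i : f.support, D.coeff i = d i := by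
    intro i
    simp only [D, MvPolynomial.coeff_sum, MvPolynomial.coeff_monomial]
    rw [Finset.sum_eq_single i]
    · simp
    · intro b _ hb
      rw [if_neg]
      intro h
      exact hb (Subtype.ext h)
    · simp
  have hdeg : D.totalDegree ≤ f.totalDegree := by
    refine (MvPolynomial.totalDegree_finsetSum _ _).trans (Finset.sup_le fun i _ => ?_)
    refine (MvPolynomial.totalDegree_monomial_le _ _).trans ?_
    exact MvPolynomial.le_totalDegree i.2
  have hnd : ¬ f ∣ D := by
    rintro ⟨h, hh⟩
    apply hd
    obtain ⟨a, rfl⟩ : ∃ a, h = MvPolynomial.C a := by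
      by_cases h0 : h = 0
      · exact ⟨0, by simp [h0]⟩
      · have := MvPolynomial.totalDegree_mul_of_isDomain hf.ne_zero h0
        rw [← hh] at this
        exact ⟨_, MvPolynomial.totalDegree_eq_zero_iff_eq_C.1 (by omega)⟩
    refine ⟨a, fun i => ?_⟩
    rw [← hcoeff i, hh, mul_comm, MvPolynomial.coeff_C_mul]
  refine (finite_inter_torus f D hf hnd).subset ?_
  rintro g ⟨h1, h2⟩
  exact ⟨by rw [eval_mon]; exact h1, by rw [hDeval]; exact h2⟩

lemma PP_smul {G ι : Type*} [CommGroup G] [Fintype ι] (χ : ι → G →* Kˣ) (c : ι → K) (a : K)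
    (ha : a ≠ 0) (hc : PP χ c) : PP χ (fun i => c i / a) := by
  intro d hd
  refine (hc d ?_).subset ?_
  · rintro ⟨b, hb⟩
    exact hd ⟨b * a, fun i => by rw [hb]; field_simp⟩
  · rintro g ⟨h1, h2⟩
    refine ⟨?_, h2⟩
    change ∑ i, c i / a * (χ i g : K) = 0 at h1
    have : ∑ i, c i / a * (χ i g : K) = (∑ i, c i * (χ i g : K)) / a := by
      rw [Finset.sum_div]
      exact Finset.sum_congr rfl fun i _ => by ring
    rw [this, div_eq_zero_iff, or_iff_left ha] at h1
    exact h1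

/-- finite unions of F-sets -/
def Fu (p : ℕ) (Γ : Subgroup (Kˣ × Kˣ)) (T : Set (Kˣ × Kˣ)) : Prop :=
  ∃ 𝒯 : Set (Set (Kˣ × Kˣ)), 𝒯.Finite ∧ (∀ S ∈ 𝒯, IsFSet₂ p Γ S) ∧ T = ⋃₀ 𝒯

variable {p : ℕ} {Γ : Subgroup (Kˣ × Kˣ)}

lemma Fu.biUnion {I : Type*} (s : Set I) (hs : s.Finite) (T : I → Set (Kˣ × Kˣ))
    (h : ∀ i ∈ s, Fu p Γ (T i)) : Fu p Γ (⋃ i ∈ s, T i) := by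
  choose! 𝒯 h1 h2 h3 using h
  refine ⟨⋃ i ∈ s, 𝒯 i, hs.biUnion h1, ?_, ?_⟩
  · intro S hS
    simp only [Set.mem_iUnion] at hS
    obtain ⟨i, hi, hS⟩ := hS
    exact h2 i hi S hS
  · ext x
    simp only [Set.mem_iUnion, Set.mem_sUnion]
    constructor
    · rintro ⟨i, hi, hx⟩
      rw [h3 i hi] at hx
      obtain ⟨S, hS, hx⟩ := hx
      exact ⟨S, ⟨i, hi, hS⟩, hx⟩
    · rintro ⟨S, ⟨i, hi, hS⟩, hx⟩
      exact ⟨i, hi, by rw [h3 i hi]; exact ⟨S, hS, hx⟩⟩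

lemma Fu.of_Gd {T : Set (Kˣ × Kˣ)} (h : Gd p Γ T) : Fu p Γ T := by
  obtain ⟨𝒯, h1, h2, h3⟩ := h
  refine ⟨𝒯, h1, fun S hS => ?_, h3⟩
  obtain ⟨hSΓ, m, hm, α₀, α, hα⟩ := h2 S hS
  refine ⟨S, ⊥, ⟨hSΓ, m, hm, 1, 1, le_rfl, α₀, fun _ => α, ?_⟩, bot_le, ?_⟩
  · rw [hα]
    ext g
    constructor
    · rintro ⟨n, rfl⟩
      exact ⟨fun _ => n, by simp⟩
    · rintro ⟨n, rfl⟩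
      exact ⟨n 0, by simp⟩
  · ext g
    simp

lemma Fu.of_finite {T : Set (Kˣ × Kˣ)} (hT : T.Finite) (h : T ⊆ Γ) : Fu p Γ T :=
  Fu.of_Gd (Gd.of_finite hT h)

lemma Fu.fiber (ψ : Kˣ × Kˣ →* Kˣ) (t : Kˣ) : Fu p Γ {g | g ∈ Γ ∧ ψ g = t} := by
  by_cases hex : ∃ g0, g0 ∈ Γ ∧ ψ g0 = t
  · obtain ⟨g0, hg0, ht⟩ := hex
    refine ⟨{{g | g ∈ Γ ∧ ψ g = t}}, Set.finite_singleton _, ?_, by simp⟩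
    rintro S rfl
    refine ⟨{g0}, Γ ⊓ ψ.ker, ⟨by simpa using hg0, 1, le_rfl, 0, 1, le_rfl, g0, fun _ => 1, ?_⟩,
      inf_le_left, ?_⟩
    · ext g; simp
    · ext g
      constructor
      · rintro ⟨hg, hgt⟩
        refine ⟨g0, rfl, g0⁻¹ * g, ⟨Γ.mul_mem (Γ.inv_mem hg0) hg, ?_⟩, by simp⟩
        change ψ (g0⁻¹ * g) = 1
        rw [map_mul, map_inv, ht, hgt]; simp
      · rintro ⟨_, rfl, b, ⟨hb, hbk⟩, rfl⟩
        have hbk : ψ b = 1 := hbk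
        exact ⟨Γ.mul_mem hg0 hb, by rw [map_mul, hbk, mul_one, ht]⟩
  · convert! (Fu.of_finite (p := p) (Γ := Γ) Set.finite_empty (Set.empty_subset _))
    rw [Set.eq_empty_iff_forall_notMem]
    rintro g hg
    exact hex ⟨g, hg⟩

lemma laurent_roots {I : Type*} (s : Finset I) (c : I → K) (n : I → ℤ) (hn : Set.InjOn n s)
    (k : I) (hk : k ∈ s) (hck : c k ≠ 0) :
    {t : Kˣ | ∑ i ∈ s, c i * ((t ^ n i : Kˣ) : K) = 0}.Finite := by
  classical
  let M : ℕ := ∑ i ∈ s, (n i).natAbs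
  have hM : ∀ i ∈ s, 0 ≤ n i + M := by
    intro i hi
    have := Finset.single_le_sum (f := fun i => (n i).natAbs) (fun _ _ => Nat.zero_le _) hi
    change (n i).natAbs ≤ M at this
    omega
  let q : Polynomial K := ∑ i ∈ s, Polynomial.monomial (n i + M).toNat (c i)
  have hq : q ≠ 0 := by
    intro h0
    have : q.coeff (n k + M).toNat = c k := by
      simp only [q, Polynomial.finsetSum_coeff, Polynomial.coeff_monomial]
      rw [Finset.sum_eq_single k]
      · simp
      · intro b hb hbk
        rw [if_neg]
        intro h
        apply hbk
        apply hn hb hk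
        have := hM b hb
        have := hM k hk
        omega
      · intro h; exact absurd hk h
    rw [h0] at this
    exact hck (by simpa using this.symm)
  refine Set.Finite.subset ((q.roots.toFinset.finite_toSet).preimage (f := fun t : Kˣ => (t : K))
    (fun a _ b _ h => Units.ext h)) ?_
  intro t ht
  simp only [Set.mem_preimage, Finset.mem_coe, Multiset.mem_toFinset]
  rw [Polynomial.mem_roots hq, Polynomial.IsRoot.def]
  simp only [q, Polynomial.eval_finsetSum, Polynomial.eval_monomial]
  have : ∀ i ∈ s, c i * (t : K) ^ (n i + M).toNat = (c i * ((t ^ n i : Kˣ) : K)) * (t : K) ^ M := by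
    intro i hi
    rw [mul_assoc]
    congr 1
    have h1 : t ^ (n i + M).toNat = t ^ n i * t ^ M := by
      rw [← zpow_natCast, ← zpow_natCast, ← zpow_add, Int.toNat_of_nonneg (hM i hi)]
    rw [← Units.val_pow_eq_pow_val, h1]; simp
  rw [Finset.sum_congr rfl this, ← Finset.sum_mul]
  have ht' : ∑ i ∈ s, c i * ((t ^ n i : Kˣ) : K) = 0 := ht
  rw [ht', zero_mul]

lemma det_pow {A : Type*} [CommGroup A] (x y : A) (a b c d : ℤ) (h1 : x ^ a * y ^ b = 1)
    (h2 : x ^ c * y ^ d = 1) : x ^ (a * d - b * c) = 1 ∧ y ^ (a * d - b * c) = 1 := by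
  constructor
  · have : x ^ (a * d - b * c) = (x ^ a * y ^ b) ^ d * ((x ^ c * y ^ d) ^ b)⁻¹ := by
      rw [mul_zpow, mul_zpow, ← zpow_mul, ← zpow_mul, ← zpow_mul, ← zpow_mul, zpow_sub,
        mul_comm d b, mul_comm c b, mul_inv, mul_mul_mul_comm, mul_inv_cancel, mul_one]
    rw [this, h1, h2]; simp
  · have : y ^ (a * d - b * c) = (x ^ c * y ^ d) ^ a * ((x ^ a * y ^ b) ^ c)⁻¹ := by
      rw [mul_zpow, mul_zpow, ← zpow_mul, ← zpow_mul, ← zpow_mul, ← zpow_mul, zpow_sub,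
        mul_comm d a, mul_comm c a, mul_inv, mul_mul_mul_comm, mul_inv_cancel, one_mul]
    rw [this, h1, h2]; simp

/-- determinant of three exponents -/
def dt (i j k : Fin 2 →₀ ℕ) : ℤ :=
  ((i 0 : ℤ) - j 0) * ((k 1 : ℤ) - j 1) - ((i 1 : ℤ) - j 1) * ((k 0 : ℤ) - j 0)

lemma mon_eq {i j : Fin 2 →₀ ℕ} {g : Kˣ × Kˣ} (h : mon K i g = mon K j g) :
    g.1 ^ ((i 0 : ℤ) - j 0) * g.2 ^ ((i 1 : ℤ) - j 1) = 1 := by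
  rw [mon_apply, mon_apply] at h
  rw [zpow_sub, zpow_sub, zpow_natCast, zpow_natCast, zpow_natCast, zpow_natCast,
    mul_mul_mul_comm, h, ← mul_inv, mul_inv_cancel]

lemma good_nondeg [IsAlgClosed K] (hp : p.Prime) [CharP K p] (hΓ : Γ.FG)
    (f : MvPolynomial (Fin 2) K) (hf : Irreducible f)
    (i j k : Fin 2 →₀ ℕ) (hi : i ∈ f.support) (hj : j ∈ f.support) (hk : k ∈ f.support)
    (hd : dt i j k ≠ 0) :
    Fu p Γ ({g | MvPolynomial.eval ![(g.1 : K), (g.2 : K)] f = 0} ∩ Γ) := by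
  have : Fact p.Prime := ⟨hp⟩
  letI : Algebra (ZMod p) K := ZMod.algebra K p
  let χ : f.support → Kˣ × Kˣ →* Kˣ := fun i => mon K (i : Fin 2 →₀ ℕ)
  let j' : f.support := ⟨j, hj⟩
  have hne : ∀ i : f.support, f.coeff i ≠ 0 := fun i => MvPolynomial.mem_support_iff.1 i.2
  let c0 : f.support → Kˣ := fun i => Units.mk0 _ (hne i) / Units.mk0 _ (hne j')
  have hvc : vc c0 = fun i : f.support => f.coeff (i : Fin 2 →₀ ℕ) / f.coeff j := by
    funext i
    simp [vc, c0, j']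
  have hZS : {g | MvPolynomial.eval ![(g.1 : K), (g.2 : K)] f = 0} = ZS χ (vc c0) := by
    ext g
    change _ = 0 ↔ ∑ i, vc c0 i * (χ i g : K) = 0
    have : ∑ i, vc c0 i * (χ i g : K) = (∑ i : f.support, f.coeff i * (χ i g : K)) / f.coeff j := by
      rw [Finset.sum_div, hvc]
      exact Finset.sum_congr rfl fun i _ => by ring
    rw [this, div_eq_zero_iff, or_iff_left (hne j'), eval_mon]
  rw [hZS]
  apply Fu.of_Gd
  refine core χ j' p ?_ ?_ Γ hΓ ?_ c0 ?_ ?_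
  · intro n a b h
    have h' : a ^ (p ^ n) = b ^ (p ^ n) := h
    exact Prod.ext (units_pow_inj p n (congrArg Prod.fst h')) (units_pow_inj p n (congrArg Prod.snd h'))
  · intro g hg
    have h1 := mon_eq (hg ⟨i, hi⟩)
    have h2 := mon_eq (hg ⟨k, hk⟩)
    obtain ⟨h3, h4⟩ := det_pow _ _ _ _ _ _ h1 h2
    rw [isOfFinOrder_iff_zpow_eq_one]
    exact ⟨dt i j k, hd, Prod.ext h3 h4⟩
  · intro n hn g
    have key : ∀ u : Kˣ, ∃ v : Kˣ, v ^ n = u := by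
      intro u
      obtain ⟨z, hz⟩ := IsAlgClosed.exists_pow_nat_eq (u : K) hn
      have hz0 : z ≠ 0 := by
        rintro rfl
        rw [zero_pow hn.ne'] at hz
        exact u.ne_zero hz.symm
      exact ⟨Units.mk0 z hz0, Units.ext (by simpa using hz)⟩
    obtain ⟨v, hv⟩ := key g.1
    obtain ⟨w, hw⟩ := key g.2
    exact ⟨(v, w), Prod.ext hv hw⟩
  · rw [hvc]
    exact PP_smul χ _ _ (hne j') (PP_poly f hf)
  · simp [c0]

lemma collinear (s : Finset (Fin 2 →₀ ℕ)) (k : Fin 2 →₀ ℕ) (hk : k ∈ s)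
    (h : ∀ i ∈ s, ∀ j ∈ s, dt i k j = 0) :
    ∃ d1 d2 : ℤ, ∃ n : (Fin 2 →₀ ℕ) → ℤ, ∀ i ∈ s,
      (i 0 : ℤ) - k 0 = n i * d1 ∧ (i 1 : ℤ) - k 1 = n i * d2 := by
  by_cases hall : ∀ i ∈ s, i = k
  · exact ⟨1, 0, fun _ => 0, fun i hi => by rw [hall i hi]; simp⟩
  · push Not at hall
    obtain ⟨l, hl, hlk⟩ := hall
    set a : ℤ := (l 0 : ℤ) - k 0 with ha
    set b : ℤ := (l 1 : ℤ) - k 1 with hb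
    have hg : Int.gcd a b ≠ 0 := by
      rw [Ne, Int.gcd_eq_zero_iff]
      rintro ⟨h0, h1⟩
      apply hlk
      ext t
      fin_cases t
      · change l 0 = k 0; omega
      · change l 1 = k 1; omega
    obtain ⟨d1, hd1⟩ := Int.gcd_dvd_left a b
    obtain ⟨d2, hd2⟩ := Int.gcd_dvd_right a b
    have hbez := Int.gcd_eq_gcd_ab a b
    set D : ℤ := (Int.gcd a b : ℤ) with hD
    have hD0 : D ≠ 0 := Int.natCast_ne_zero.2 hg
    set u := Int.gcdA a b
    set v := Int.gcdB a b
    have hone : d1 * u + d2 * v = 1 := by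
      apply mul_left_cancel₀ hD0
      calc D * (d1 * u + d2 * v) = (D * d1) * u + (D * d2) * v := by ring
        _ = a * u + b * v := by rw [← hd1, ← hd2]
        _ = D * 1 := by rw [← hbez, mul_one]
    refine ⟨d1, d2, fun i => u * ((i 0 : ℤ) - k 0) + v * ((i 1 : ℤ) - k 1), fun i hi => ?_⟩
    have hdt := h i hi l hl
    rw [dt, ← ha, ← hb] at hdt
    set x : ℤ := (i 0 : ℤ) - k 0
    set y : ℤ := (i 1 : ℤ) - k 1
    have hxy : x * d2 - y * d1 = 0 := by
      apply mul_left_cancel₀ hD0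
      calc D * (x * d2 - y * d1) = x * (D * d2) - y * (D * d1) := by ring
        _ = 0 := by rw [← hd1, ← hd2, hdt]
        _ = D * 0 := by ring
    constructor
    · linear_combination (-x) * hone + v * hxy
    · linear_combination (-y) * hone - u * hxy

lemma good_deg (f : MvPolynomial (Fin 2) K) (k : Fin 2 →₀ ℕ) (hk : k ∈ f.support)
    (h : ∀ i ∈ f.support, ∀ j ∈ f.support, dt i k j = 0) :
    Fu p Γ ({g | MvPolynomial.eval ![(g.1 : K), (g.2 : K)] f = 0} ∩ Γ) := by
  obtain ⟨d1, d2, n, hn⟩ := collinear f.support k hk h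
  let ψ : Kˣ × Kˣ →* Kˣ := (zpowGroupHom d1).comp (MonoidHom.fst Kˣ Kˣ) *
    (zpowGroupHom d2).comp (MonoidHom.snd Kˣ Kˣ)
  have hψ : ∀ g, ψ g = g.1 ^ d1 * g.2 ^ d2 := fun g => rfl
  have hinj : Set.InjOn n f.support := by
    intro i hi j hj hij
    obtain ⟨h1, h2⟩ := hn i hi
    obtain ⟨h3, h4⟩ := hn j hj
    rw [hij] at h1 h2
    ext t
    fin_cases t
    · change i 0 = j 0; omega
    · change i 1 = j 1; omega
  have hfin := laurent_roots f.support (fun i => f.coeff i) n hinj k hk (MvPolynomial.mem_support_iff.1 hk)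
  set R := {t : Kˣ | ∑ i ∈ f.support, f.coeff i * ((t ^ n i : Kˣ) : K) = 0} with hR
  have heval : ∀ g : Kˣ × Kˣ, MvPolynomial.eval ![(g.1 : K), (g.2 : K)] f =
      (mon K k g : K) * ∑ i ∈ f.support, f.coeff i * (((ψ g) ^ n i : Kˣ) : K) := by
    intro g
    rw [eval_mon, Finset.univ_eq_attach,
      Finset.sum_attach f.support (fun i => f.coeff i * (mon K i g : K)), Finset.mul_sum]
    refine Finset.sum_congr rfl fun i hi => ?_
    obtain ⟨h1, h2⟩ := hn i hi
    have : mon K i g = mon K k g * ψ g ^ n i := by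
      rw [hψ, mul_zpow, ← zpow_mul, ← zpow_mul, mul_comm d1, mul_comm d2, ← h1, ← h2, zpow_sub,
        zpow_sub, mon_apply, mon_apply]
      simp only [zpow_natCast]
      rw [mul_mul_mul_comm (g.1 ^ i 0), ← mul_inv, mul_comm (g.1 ^ i 0 * _), mul_inv_cancel_left]
    rw [this, Units.val_mul]
    ring
  have : {g : Kˣ × Kˣ | MvPolynomial.eval ![(g.1 : K), (g.2 : K)] f = 0} ∩ Γ =
      ⋃ t ∈ R, {g | g ∈ Γ ∧ ψ g = t} := by
    ext g
    simp only [Set.mem_iUnion, exists_prop]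
    constructor
    · rintro ⟨h1, h2⟩
      have h1' : MvPolynomial.eval ![(g.1 : K), (g.2 : K)] f = 0 := h1
      rw [heval, mul_eq_zero, or_iff_right (Units.ne_zero _)] at h1'
      exact ⟨ψ g, h1', h2, rfl⟩
    · rintro ⟨t, ht, h2, rfl⟩
      refine ⟨?_, h2⟩
      change MvPolynomial.eval ![(g.1 : K), (g.2 : K)] f = 0
      have ht' : ∑ i ∈ f.support, f.coeff i * (((ψ g) ^ n i : Kˣ) : K) = 0 := ht
      rw [heval, ht', mul_zero]
  rw [this]
  exact Fu.biUnion R hfin _ fun t _ => Fu.fiber ψ t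

lemma good_irred [IsAlgClosed K] (hp : p.Prime) [CharP K p] (hΓ : Γ.FG)
    (f : MvPolynomial (Fin 2) K) (hf : Irreducible f) :
    Fu p Γ ({g | MvPolynomial.eval ![(g.1 : K), (g.2 : K)] f = 0} ∩ Γ) := by
  obtain ⟨k, hk⟩ : f.support.Nonempty := by
    rw [Finset.nonempty_iff_ne_empty, Ne, MvPolynomial.support_eq_empty]
    exact hf.ne_zero
  by_cases h : ∀ i ∈ f.support, ∀ j ∈ f.support, dt i k j = 0
  · exact good_deg f k hk h
  · push Not at h
    obtain ⟨i, hi, j, hj, hd⟩ := h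
    exact good_nondeg hp hΓ f hf i k j hi hk hj hd

end

theorem proper_subvariety_of_torus_squared_intersection_F_sets
    (K : Type*) [Field K] [IsAlgClosed K] (p : ℕ) (hp : p.Prime) [CharP K p]
    (X : Set (Kˣ × Kˣ)) (hX : IsTorusSubvariety₂ K X) (hXne : X ≠ Set.univ)
    (Γ : Subgroup (Kˣ × Kˣ)) (hΓ : Γ.FG) :
    ∃ (n : ℕ) (Ts : Fin n → Set (Kˣ × Kˣ)),
      (∀ i, IsFSet₂ p Γ (Ts i)) ∧ X ∩ ↑Γ = ⋃ i, Ts i := by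
  suffices hFu : Fu p Γ (X ∩ Γ) by
    obtain ⟨𝒯, h1, h2, h3⟩ := hFu
    have := h1.to_subtype
    obtain ⟨n, ⟨e⟩⟩ := Finite.exists_equiv_fin 𝒯
    refine ⟨n, fun i => (e.symm i : Set (Kˣ × Kˣ)), fun i => h2 _ (e.symm i).2, ?_⟩
    rw [h3, Set.sUnion_eq_iUnion]
    exact (e.symm.iSup_comp (g := fun x : 𝒯 => (x : Set (Kˣ × Kˣ)))).symm
  obtain ⟨𝒮, rfl⟩ := hX
  obtain ⟨f, hf𝒮, hf0⟩ : ∃ f ∈ 𝒮, f ≠ 0 := by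
    by_contra hcon
    push Not at hcon
    apply hXne
    rw [Set.eq_univ_iff_forall]
    intro g f hf
    rw [hcon f hf, map_zero]
  obtain ⟨s, hs, hsf⟩ := WfDvdMonoid.exists_factors f hf0
  classical
  set V : MvPolynomial (Fin 2) K → Set (Kˣ × Kˣ) :=
    fun h => {g | MvPolynomial.eval ![(g.1 : K), (g.2 : K)] h = 0} with hV
  set X := {g : Kˣ × Kˣ | ∀ f ∈ 𝒮, MvPolynomial.eval ![(g.1 : K), (g.2 : K)] f = 0} with hXdef
  have hdec : X ∩ Γ = ⋃ h ∈ (s.toFinset : Set (MvPolynomial (Fin 2) K)), (V h ∩ X ∩ Γ) := by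
    ext g
    simp only [Set.mem_iUnion, exists_prop]
    constructor
    · rintro ⟨h1, h2⟩
      have h3 := h1 f hf𝒮
      obtain ⟨u, hu⟩ := hsf
      rw [← hu, map_mul, mul_eq_zero, or_iff_left (u.isUnit.map _).ne_zero, map_multiset_prod,
        Multiset.prod_eq_zero_iff, Multiset.mem_map] at h3
      obtain ⟨h, hh, h0⟩ := h3
      exact ⟨h, by simpa using hh, ⟨h0, h1⟩, h2⟩
    · rintro ⟨h, _, ⟨_, h1⟩, h2⟩
      exact ⟨h1, h2⟩
  rw [hdec]
  refine Fu.biUnion _ (Finset.finite_toSet _) _ fun h hh => ?_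
  have hirr : Irreducible h := hs h (by simpa using hh)
  by_cases hall : ∀ g ∈ 𝒮, h ∣ g
  · have : V h ∩ X = V h := by
      rw [Set.inter_eq_left]
      intro z hz g hg
      obtain ⟨r, rfl⟩ := hall g hg
      have hz' : MvPolynomial.eval ![(z.1 : K), (z.2 : K)] h = 0 := hz
      rw [map_mul, hz', zero_mul]
    rw [this]
    exact good_irred hp hΓ h hirr
  · push Not at hall
    obtain ⟨g, hg, hndvd⟩ := hall
    refine Fu.of_finite ((finite_inter_torus h g hirr hndvd).subset ?_) Set.inter_subset_right
    rintro z ⟨⟨h1, h2⟩, _⟩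
    exact ⟨h1, h2 g hg⟩
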